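/- Let 0 < p ≤ 1 and 0 < δ ≤ 2p/(p+1), and let φ ≥ 0 be an even probability density on ℝ with ∫ |v|^{2/(p+1)+δ} φ(v) dv < +∞. Then the function ξ ↦ ∂_ξ φ̂(ξ)/ξ^{(1−p)/(p+1)} is uniformly δ-Hölder continuous on (0,∞): there exists C > 0 such that |∂_ξ φ̂(ξ)/ξ^{(1−p)/(p+1)} − ∂_ξ φ̂(τ)/τ^{(1−p)/(p+1)}| ≤ C |ξ−τ|^δ for all ξ, τ > 0. (Here ∂_ξ φ̂(ξ) = −∫ v φ(v) sin(vξ) dv since φ is even.) -/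

import Mathlib

open Real MeasureTheory Set

/-!
Put `a = (1 - p) / (p + 1) ∈ [0, 1)`, so that `2 / (p + 1) = 1 + a` and `2 p / (p + 1) = 1 - a`.
For `v ≠ 0` the integrand scales as `v sin (v ξ) / ξ ^ a = |v| ^ (1 + a) * g (|v| ξ)` with
`g x = sin x / x ^ a`. The function `g` is bounded by `1` and `(1 - a)`-Hölder on `(0, ∞)`, hence
`δ`-Hölder with constant `2` for every `0 < δ ≤ 1 - a` (`sin_div_rpow_holder`). The integrand is
therefore `δ`-Hölder in `ξ` with constant `2 |v| ^ (1 + a + δ)` (`weighted_sin_holder`), and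
integrating against `φ` bounds the Hölder constant by twice the moment of order `1 + a + δ`.
-/

theorem abs_sin_div_rpow_le_one {a x : ℝ} (ha : 0 ≤ a) (ha1 : a ≤ 1) (hx : 0 < x) :
    |Real.sin x / x ^ a| ≤ 1 := by
  have hxa : 0 < x ^ a := Real.rpow_pos_of_pos hx a
  rw [abs_div, abs_of_pos hxa, div_le_one hxa]
  rcases le_total x 1 with h | h
  · calc |Real.sin x| ≤ |x| := Real.abs_sin_le_abs
      _ = x ^ (1 : ℝ) := by rw [abs_of_pos hx, Real.rpow_one]
      _ ≤ x ^ a := Real.rpow_le_rpow_of_exponent_ge hx h ha1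
  · exact (Real.abs_sin_le_one x).trans (Real.one_le_rpow h ha)

/-- `x ↦ sin x / x ^ a` is `(1 - a)`-Hölder with constant `2`. The increment splits as
`(sin y - sin x) / y ^ a + sin x * (1 / y ^ a - 1 / x ^ a)`, and each part is at most
`(y - x) / y ^ a ≤ (y - x) ^ (1 - a)` in absolute value; for the second part this follows from
`|sin x| ≤ x` and the monotonicity of `x ^ (1 - a)`. -/
theorem sin_div_rpow_holder_endpoint {a x y : ℝ} (ha : 0 ≤ a) (ha1 : a ≤ 1) (hx : 0 < x)
    (hxy : x < y) :
    |Real.sin y / y ^ a - Real.sin x / x ^ a| ≤ 2 * (y - x) ^ (1 - a) := by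
  have hy : 0 < y := hx.trans hxy
  have hh : 0 < y - x := sub_pos.2 hxy
  have hxa : 0 < x ^ a := Real.rpow_pos_of_pos hx a
  have hya : 0 < y ^ a := Real.rpow_pos_of_pos hy a
  have hha : 0 < (y - x) ^ a := Real.rpow_pos_of_pos hh a
  have hmono : x ^ a ≤ y ^ a := Real.rpow_le_rpow hx.le hxy.le ha
  have hmain : (y - x) / y ^ a ≤ (y - x) ^ (1 - a) := by
    rw [Real.rpow_sub hh, Real.rpow_one]
    exact div_le_div_of_nonneg_left hh.le hha
      (Real.rpow_le_rpow hh.le (by linarith) ha)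
  have h1 : |(Real.sin y - Real.sin x) / y ^ a| ≤ (y - x) / y ^ a := by
    rw [abs_div, abs_of_pos hya]
    gcongr
    have := Real.abs_sin_sub_sin_le y x
    rwa [abs_of_pos hh] at this
  have h2 : |Real.sin x * (1 / y ^ a - 1 / x ^ a)| ≤ (y - x) / y ^ a := by
    have hle : 1 / y ^ a ≤ 1 / x ^ a := one_div_le_one_div_of_le hxa hmono
    have hs : |Real.sin x| ≤ x := by
      simpa [abs_of_pos hx] using Real.abs_sin_le_abs (x := x)
    have hpow : x / x ^ a ≤ y / y ^ a := by
      have := Real.rpow_le_rpow hx.le hxy.le (sub_nonneg.2 ha1)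
      rwa [Real.rpow_sub hx, Real.rpow_sub hy, Real.rpow_one, Real.rpow_one] at this
    rw [abs_mul, abs_of_nonpos (sub_nonpos.2 hle)]
    calc |Real.sin x| * -(1 / y ^ a - 1 / x ^ a)
        ≤ x * -(1 / y ^ a - 1 / x ^ a) :=
          mul_le_mul_of_nonneg_right hs (by linarith)
      _ = x / x ^ a - x / y ^ a := by ring
      _ ≤ y / y ^ a - x / y ^ a := by linarith
      _ = (y - x) / y ^ a := by ring
  calc |Real.sin y / y ^ a - Real.sin x / x ^ a|
      = |(Real.sin y - Real.sin x) / y ^ a + Real.sin x * (1 / y ^ a - 1 / x ^ a)| := by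
        congr 1; ring
    _ ≤ _ := abs_add_le _ _
    _ ≤ 2 * (y - x) ^ (1 - a) := by linarith

/-- Interpolation between boundedness (for increments at least `1`) and the endpoint exponent
`1 - a` (for increments at most `1`). -/
theorem sin_div_rpow_holder {a δ x y : ℝ} (ha : 0 ≤ a) (ha1 : a ≤ 1) (hδ : 0 < δ)
    (hδa : δ ≤ 1 - a) (hx : 0 < x) (hy : 0 < y) :
    |Real.sin x / x ^ a - Real.sin y / y ^ a| ≤ 2 * |x - y| ^ δ := by
  wlog hxy : y < x generalizing x y
  · rcases (not_lt.1 hxy).eq_or_lt with rfl | h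
    · simp [Real.zero_rpow hδ.ne']
    · rw [abs_sub_comm, abs_sub_comm x y]
      exact this hy hx h
  have hh : 0 < x - y := sub_pos.2 hxy
  rw [abs_of_pos hh]
  rcases le_total (x - y) 1 with h | h
  · refine (sin_div_rpow_holder_endpoint ha ha1 hy hxy).trans ?_
    have := Real.rpow_le_rpow_of_exponent_ge hh h hδa
    linarith
  · have h1 := abs_sin_div_rpow_le_one ha ha1 hx
    have h2 := abs_sin_div_rpow_le_one ha ha1 hy
    have h3 := Real.one_le_rpow h hδ.le
    have h4 := abs_sub (Real.sin x / x ^ a) (Real.sin y / y ^ a)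
    linarith

theorem mul_sin_div_rpow_scaling {a w ξ : ℝ} (hw : 0 < w) (hξ : 0 < ξ) :
    w * Real.sin (w * ξ) / ξ ^ a = w ^ (1 + a) * (Real.sin (w * ξ) / (w * ξ) ^ a) := by
  have hwa : 0 < w ^ a := Real.rpow_pos_of_pos hw a
  have hξa : 0 < ξ ^ a := Real.rpow_pos_of_pos hξ a
  rw [Real.mul_rpow hw.le hξ.le, Real.rpow_add hw, Real.rpow_one]
  field_simp

theorem weighted_sin_holder {a δ ξ τ : ℝ} (ha : 0 ≤ a) (ha1 : a ≤ 1) (hδ : 0 < δ)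
    (hδa : δ ≤ 1 - a) (hξ : 0 < ξ) (hτ : 0 < τ) (v : ℝ) :
    |v * Real.sin (v * ξ) / ξ ^ a - v * Real.sin (v * τ) / τ ^ a| ≤
      2 * |ξ - τ| ^ δ * |v| ^ (1 + a + δ) := by
  have heven : ∀ t, v * Real.sin (v * t) = |v| * Real.sin (|v| * t) := by
    intro t
    rcases abs_choice v with h | h <;> rw [h]
    simp
  rw [heven, heven]
  rcases (abs_nonneg v).eq_or_lt with h | hw
  · rw [← h]
    simp only [zero_mul, zero_div, sub_zero, abs_zero]
    positivity
  · rw [mul_sin_div_rpow_scaling hw hξ, mul_sin_div_rpow_scaling hw hτ, ← mul_sub, abs_mul,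
      abs_of_pos (Real.rpow_pos_of_pos hw _)]
    have := sin_div_rpow_holder ha ha1 hδ hδa (mul_pos hw hξ) (mul_pos hw hτ)
    rw [← mul_sub, abs_mul, abs_abs, Real.mul_rpow hw.le (abs_nonneg _)] at this
    calc |v| ^ (1 + a) * _ ≤ |v| ^ (1 + a) * (2 * (|v| ^ δ * |ξ - τ| ^ δ)) := by gcongr
      _ = _ := by rw [Real.rpow_add hw (1 + a) δ]; ring

theorem integrable_mul_sin {q : ℝ} (hq : 1 ≤ q) {φ : ℝ → ℝ} (hφ_nonneg : ∀ v, 0 ≤ φ v)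
    (hφ_int : Integrable φ) (hφ_mom : Integrable (fun v : ℝ => |v| ^ q * φ v)) (ξ : ℝ) :
    Integrable (fun v : ℝ => v * φ v * Real.sin (v * ξ)) := by
  refine (hφ_int.add hφ_mom).mono' ?_ (Filter.Eventually.of_forall fun v => ?_)
  · exact (continuous_id.aestronglyMeasurable.mul hφ_int.1).mul
      (by fun_prop : Continuous fun v : ℝ => Real.sin (v * ξ)).aestronglyMeasurable
  · have hv : |v| ≤ 1 + |v| ^ q := by
      rcases le_total |v| 1 with h | h
      · have : 0 ≤ |v| ^ q := by positivity
        linarith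
      · have := Real.self_le_rpow_of_one_le h hq
        linarith
    rw [Real.norm_eq_abs, abs_mul, abs_mul, abs_of_nonneg (hφ_nonneg v)]
    calc |v| * φ v * |Real.sin (v * ξ)| ≤ |v| * φ v * 1 :=
          mul_le_mul_of_nonneg_left (Real.abs_sin_le_one _)
            (mul_nonneg (abs_nonneg v) (hφ_nonneg v))
      _ ≤ (1 + |v| ^ q) * φ v := by
          rw [mul_one]; exact mul_le_mul_of_nonneg_right hv (hφ_nonneg v)
      _ = _ := by simp only [Pi.add_apply]; ring

/-- For an even probability density `φ` with finite moment of order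
`2/(p+1)+δ`, the weighted derivative of its Fourier transform,
`ξ ↦ ∂_ξ φ̂(ξ)/ξ^{(1-p)/(p+1)}` with `∂_ξ φ̂(ξ) = -∫ v φ(v) sin(vξ) dv`,
is uniformly δ-Hölder continuous on `(0,∞)`. -/
theorem weighted_ft_derivative_holder (p δ : ℝ) (hp : 0 < p) (hp1 : p ≤ 1)
    (hδ : 0 < δ) (hδ2 : δ ≤ 2 * p / (p + 1))
    (φ : ℝ → ℝ) (hφ_nonneg : ∀ v, 0 ≤ φ v) (hφ_int : Integrable φ)
    (hφ_mass : ∫ v, φ v = 1) (hφ_even : ∀ v, φ (-v) = φ v)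
    (hφ_mom : Integrable (fun v : ℝ => |v| ^ (2 / (p + 1) + δ) * φ v)) :
    ∃ C > (0 : ℝ), ∀ ξ > (0 : ℝ), ∀ τ > (0 : ℝ),
      |(-∫ v : ℝ, v * φ v * Real.sin (v * ξ)) / ξ ^ ((1 - p) / (p + 1)) -
        (-∫ v : ℝ, v * φ v * Real.sin (v * τ)) / τ ^ ((1 - p) / (p + 1))| ≤
        C * |ξ - τ| ^ δ := by
  have hp' : 0 < p + 1 := by linarith
  set a : ℝ := (1 - p) / (p + 1) with ha_def
  have ha : 0 ≤ a := div_nonneg (by linarith) hp'.le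
  have hmomexp : 2 / (p + 1) = 1 + a := by rw [ha_def]; field_simp; ring
  have hδa : δ ≤ 1 - a := by
    have : 2 * p / (p + 1) = 1 - a := by rw [ha_def]; field_simp; ring
    linarith
  have ha1 : a ≤ 1 := by linarith
  rw [hmomexp] at hφ_mom
  have hM : 0 ≤ ∫ v : ℝ, |v| ^ (1 + a + δ) * φ v :=
    integral_nonneg fun v => mul_nonneg (by positivity) (hφ_nonneg v)
  -- The summand `1` only serves to make the constant strictly positive.
  refine ⟨2 * (∫ v : ℝ, |v| ^ (1 + a + δ) * φ v) + 1, by linarith, fun ξ hξ τ hτ => ?_⟩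
  have hint := integrable_mul_sin (by linarith : 1 ≤ 1 + a + δ) hφ_nonneg hφ_int hφ_mom
  have hdiff : (-∫ v : ℝ, v * φ v * Real.sin (v * ξ)) / ξ ^ a -
      (-∫ v : ℝ, v * φ v * Real.sin (v * τ)) / τ ^ a =
      -∫ v : ℝ, (v * φ v * Real.sin (v * ξ) / ξ ^ a - v * φ v * Real.sin (v * τ) / τ ^ a) := by
    rw [integral_sub ((hint ξ).div_const _) ((hint τ).div_const _), integral_div, integral_div]
    ring
  rw [hdiff, abs_neg, ← Real.norm_eq_abs]
  calc _ ≤ ∫ v : ℝ, 2 * |ξ - τ| ^ δ * (|v| ^ (1 + a + δ) * φ v) := by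
        refine norm_integral_le_of_norm_le (hφ_mom.const_mul _)
          (Filter.Eventually.of_forall fun v => ?_)
        have hfac : v * φ v * Real.sin (v * ξ) / ξ ^ a - v * φ v * Real.sin (v * τ) / τ ^ a =
            (v * Real.sin (v * ξ) / ξ ^ a - v * Real.sin (v * τ) / τ ^ a) * φ v := by ring
        rw [hfac, Real.norm_eq_abs, abs_mul, abs_of_nonneg (hφ_nonneg v), ← mul_assoc]
        exact mul_le_mul_of_nonneg_right (weighted_sin_holder ha ha1 hδ hδa hξ hτ v)
          (hφ_nonneg v)
    _ = 2 * (∫ v : ℝ, |v| ^ (1 + a + δ) * φ v) * |ξ - τ| ^ δ := by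
        rw [integral_const_mul]; ring
    _ ≤ _ := by
        gcongr
        linarith
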